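/- For each n, let a = √((3/7)n) and let f : ℝ₊ → ℝ₊ be defined by f(x) = log a for 0 ≤ x ≤ a, f(x) = log x for a ≤ x ≤ 2a, and f(x) = √x − √(2a) + log(2a) for x ≥ 2a. Let μ be the probability measure on ℝⁿ with density C_n e^{-(n-1)f(|x|)} (C_n the normalizing constant). Then ∫ x_i x_j dμ(x) = (1+ε_n)δ_{ij} for all i,j = 1,...,n, where |ε_n| ≤ C/n for a universal constant C > 0. Equivalently, ∫ x dμ(x) = 0 and (1/n)∫|x|² dμ(x) = 1 + O(1/n). -/

import Mathlib

open MeasureTheory Real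

/-- The radial profile: `log a` on `[0,a]`, `log x` on `[a,2a]`,
`√x - √(2a) + log(2a)` on `[2a,∞)`. -/
noncomputable def radialF (a x : ℝ) : ℝ :=
  if x ≤ a then Real.log a
  else if x ≤ 2 * a then Real.log x
  else Real.sqrt x - Real.sqrt (2 * a) + Real.log (2 * a)

lemma tail_pt (m k : ℕ) (a y : ℝ) (ha : 8 ≤ a) (hy : 2 * a < y) :
    y ^ m * (y ^ k * Real.exp (-(m : ℝ) * radialF a y)) ≤
      (2 * a) ^ m * y ^ ((k : ℝ) - m) := by
  have hc0 : 0 < 2 * a := by linarith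
  have hy0 : 0 < y := by linarith
  have hs : 4 ≤ √(2 * a) := Real.le_sqrt_of_sq_le (by linarith)
  have hs0 : 0 < √(2 * a) := by linarith
  have hsy : √(2 * a) < √y := Real.sqrt_lt_sqrt hc0.le hy
  have h1 : Real.log (√y / √(2 * a)) ≤ √y / √(2 * a) - 1 :=
    Real.log_le_sub_one_of_pos (by positivity)
  rw [Real.log_div (by positivity) (by positivity), Real.log_sqrt hy0.le, Real.log_sqrt hc0.le] at h1
  have h2 : √y / √(2 * a) - 1 ≤ (√y - √(2 * a)) / 4 := by
    rw [div_sub_one (by positivity)]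
    exact div_le_div_of_nonneg_left (by linarith) (by norm_num) hs
  have hF : radialF a y = √y - √(2 * a) + Real.log (2 * a) := by
    unfold radialF
    rw [if_neg (by linarith), if_neg (by linarith)]
  rw [hF, Real.rpow_sub hy0, Real.rpow_natCast, Real.rpow_natCast]
  have e1 : y ^ m = Real.exp (m * Real.log y) := by
    rw [mul_comm, Real.exp_mul, Real.exp_log hy0, Real.rpow_natCast]
  have e2 : (2 * a) ^ m = Real.exp (m * Real.log (2 * a)) := by
    rw [mul_comm (m : ℝ), Real.exp_mul, Real.exp_log hc0, Real.rpow_natCast]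
  rw [e1, e2]
  have : Real.exp (m * Real.log y) * Real.exp (-(m : ℝ) * (√y - √(2 * a) + Real.log (2 * a))) ≤
      Real.exp (m * Real.log (2 * a)) / Real.exp (m * Real.log y) := by
    rw [← Real.exp_add, ← Real.exp_sub, Real.exp_le_exp]
    have hm : (0 : ℝ) ≤ m := Nat.cast_nonneg m
    nlinarith [mul_nonneg hm (show 0 ≤ √y - √(2 * a) - 2 * (Real.log y - Real.log (2 * a)) by linarith)]
  calc _ = y ^ k * (Real.exp (m * Real.log y) * Real.exp (-(m : ℝ) * (√y - √(2 * a) + Real.log (2 * a)))) := by ring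
    _ ≤ y ^ k * (Real.exp (m * Real.log (2 * a)) / Real.exp (m * Real.log y)) := by gcongr
    _ = _ := by ring

lemma radialF_meas (a : ℝ) : Measurable (radialF a) := by
  unfold radialF
  refine Measurable.ite measurableSet_Iic measurable_const ?_
  refine Measurable.ite measurableSet_Iic Real.measurable_log ?_
  fun_prop

lemma radial_int (m k : ℕ) (a : ℝ) (ha : 8 ≤ a) (hk : k + 1 < m) :
    IntegrableOn (fun y : ℝ => y ^ m * (y ^ k * Real.exp (-(m : ℝ) * radialF a y))) (Set.Ioi 0) ∧
    ∃ T : ℝ, 0 ≤ T ∧ T ≤ (2 * a) ^ (k + 1) / ((m : ℝ) - k - 1) ∧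
      ∫ y in Set.Ioi 0, y ^ m * (y ^ k * Real.exp (-(m : ℝ) * radialF a y)) =
        a ^ (k + 1) / (m + k + 1) + ((2 * a) ^ (k + 1) - a ^ (k + 1)) / (k + 1) + T := by
  set h := (fun y : ℝ => y ^ m * (y ^ k * Real.exp (-(m : ℝ) * radialF a y))) with hh
  have hc0 : 0 < 2 * a := by linarith
  have ha0 : 0 < a := by linarith
  have hkm : (k : ℝ) + 1 < m := by exact_mod_cast hk
  have hmeas : Measurable h := by
    have := radialF_meas a
    fun_prop
  have key : ∀ t : ℝ, 0 < t → Real.exp (-(m : ℝ) * Real.log t) = (t ^ m)⁻¹ := by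
    intro t ht
    rw [neg_mul, Real.exp_neg, mul_comm, Real.exp_mul, Real.exp_log ht, Real.rpow_natCast]
  have E1 : Set.EqOn h (fun y => (a ^ m)⁻¹ * y ^ (m + k)) (Set.Ioc 0 a) := by
    intro y hy
    simp only [hh]
    rw [radialF, if_pos hy.2, key a ha0]; ring
  have E2 : Set.EqOn h (fun y => y ^ k) (Set.Ioc a (2 * a)) := by
    intro y hy
    have hy0 : 0 < y := ha0.trans hy.1
    simp only [hh]
    rw [radialF, if_neg (not_le.2 hy.1), if_pos hy.2, key y hy0]
    field_simp
  have I1 : IntegrableOn h (Set.Ioc 0 a) := by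
    rw [integrableOn_congr_fun E1 measurableSet_Ioc]
    exact (Continuous.integrableOn_Icc (by fun_prop)).mono_set Set.Ioc_subset_Icc_self
  have I2 : IntegrableOn h (Set.Ioc a (2 * a)) := by
    rw [integrableOn_congr_fun E2 measurableSet_Ioc]
    exact (Continuous.integrableOn_Icc (by fun_prop)).mono_set Set.Ioc_subset_Icc_self
  have hlt : (k : ℝ) - m < -1 := by linarith
  have I3' : IntegrableOn (fun y : ℝ => (2 * a) ^ m * y ^ ((k : ℝ) - m)) (Set.Ioi (2 * a)) :=
    (integrableOn_Ioi_rpow_of_lt hlt hc0).const_mul _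
  have hpos : ∀ y ∈ Set.Ioi (2 * a), 0 ≤ h y := by
    intro y hy
    have : 0 < y := hc0.trans hy
    simp only [hh]; positivity
  have hle : ∀ y ∈ Set.Ioi (2 * a), h y ≤ (2 * a) ^ m * y ^ ((k : ℝ) - m) :=
    fun y hy => tail_pt m k a y ha hy
  have I3 : IntegrableOn h (Set.Ioi (2 * a)) := by
    refine I3'.mono' hmeas.aestronglyMeasurable ?_
    refine (ae_restrict_iff' measurableSet_Ioi).2 (Filter.Eventually.of_forall fun y hy => ?_)
    rw [Real.norm_of_nonneg (hpos y hy)]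
    exact hle y hy
  have U2 : Set.Ioc a (2 * a) ∪ Set.Ioi (2 * a) = Set.Ioi a := Set.Ioc_union_Ioi_eq_Ioi (by linarith)
  have U1 : Set.Ioc 0 a ∪ Set.Ioi a = Set.Ioi 0 := Set.Ioc_union_Ioi_eq_Ioi (by linarith)
  have I23 : IntegrableOn h (Set.Ioi a) := U2 ▸ I2.union I3
  have I : IntegrableOn h (Set.Ioi 0) := U1 ▸ I1.union I23
  refine ⟨I, ∫ y in Set.Ioi (2 * a), h y, setIntegral_nonneg measurableSet_Ioi hpos, ?_, ?_⟩
  · refine (setIntegral_mono_on I3 I3' measurableSet_Ioi hle).trans (le_of_eq ?_)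
    rw [integral_const_mul, integral_Ioi_rpow_of_lt hlt hc0]
    have : (2 * a) ^ (k + 1) = (2 * a) ^ m * (2 * a) ^ ((k : ℝ) - m + 1) := by
      rw [← Real.rpow_natCast, ← Real.rpow_natCast, ← Real.rpow_add hc0]
      congr 1; push_cast; ring
    rw [this]
    have h1 : (k : ℝ) - m + 1 ≠ 0 := by linarith
    have h2 : (m : ℝ) - k - 1 ≠ 0 := by linarith
    rw [show (m : ℝ) - k - 1 = -((k : ℝ) - m + 1) by ring, div_neg, neg_div]
    ring
  · rw [← U1, setIntegral_union (Set.Ioc_disjoint_Ioi le_rfl) measurableSet_Ioi I1 I23,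
      ← U2, setIntegral_union (Set.Ioc_disjoint_Ioi le_rfl) measurableSet_Ioi I2 I3,
      setIntegral_congr_fun measurableSet_Ioc E1, setIntegral_congr_fun measurableSet_Ioc E2,
      ← intervalIntegral.integral_of_le ha0.le, ← intervalIntegral.integral_of_le (by linarith),
      intervalIntegral.integral_const_mul, integral_pow, integral_pow]
    rw [← add_assoc]
    congr 2
    push_cast
    field_simp
    simp only [pow_add, pow_one]
    simp [mul_assoc]

noncomputable def GG (n : ℕ) (x : Fin n → ℝ) : ℝ :=
  Real.exp (-((n : ℝ) - 1) * radialF (Real.sqrt (3 / 7 * n)) (Real.sqrt (∑ i, (x i) ^ 2)))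

lemma GG_meas (n : ℕ) : Measurable (GG n) := by
  have := radialF_meas (Real.sqrt (3 / 7 * n))
  unfold GG
  fun_prop

def flipFun (n : ℕ) (i : Fin n) (x : Fin n → ℝ) : Fin n → ℝ :=
  fun k => (if k = i then (fun t : ℝ => -t) else id) (x k)

lemma flip_inv (n : ℕ) (i : Fin n) : Function.Involutive (flipFun n i) := by
  intro x
  funext k
  by_cases h : k = i <;> simp [flipFun, h]

lemma flip_mp (n : ℕ) (i : Fin n) : MeasurePreserving (flipFun n i) volume volume := by
  refine volume_preserving_pi (f := fun k => if k = i then (fun t : ℝ => -t) else id) ?_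
  intro k
  by_cases h : k = i
  · simp only [h, if_true]
    exact Measure.measurePreserving_neg volume
  · simp only [h, if_false]
    exact MeasurePreserving.id _

lemma flip_integral (n : ℕ) (i : Fin n) (g : (Fin n → ℝ) → ℝ)
    (hg : ∀ x, g (flipFun n i x) = - g x) : ∫ x, g x = 0 := by
  have h := (flip_mp n i).integral_comp
    (MeasurableEquiv.ofInvolutive _ (flip_inv n i) (flip_mp n i).measurable).measurableEmbedding g
  simp only [hg, integral_neg] at h
  linarith

lemma GG_flip (n : ℕ) (i : Fin n) (x) : GG n (flipFun n i x) = GG n x := by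
  have : ∀ k, (flipFun n i x k) ^ 2 = x k ^ 2 := by
    intro k
    by_cases h : k = i <;> simp [flipFun, h]
  simp only [GG, this]

lemma coord_swap_integral (n : ℕ) (i j : Fin n) :
    ∫ x, GG n x * (x i * x i) = ∫ x, GG n x * (x j * x j) := by
  have h := (volume_measurePreserving_piCongrLeft (fun _ : Fin n => ℝ) (Equiv.swap i j)).integral_comp'
    (fun x => GG n x * (x i * x i))
  rw [← h]
  congr 1
  funext x
  have hx : ∀ k, (MeasurableEquiv.piCongrLeft (fun _ : Fin n => ℝ) (Equiv.swap i j)) x k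
      = x (Equiv.swap i j k) := by
    intro k
    have := MeasurableEquiv.piCongrLeft_apply_apply (β := fun _ : Fin n => ℝ) (e := Equiv.swap i j) x (Equiv.swap i j k)
    simpa using this
  have hs : ∑ k, x (Equiv.swap i j k) ^ 2 = ∑ k, x k ^ 2 :=
    Equiv.sum_comp (Equiv.swap i j) (fun k => x k ^ 2)
  simp only [GG, hx, hs, Equiv.swap_apply_left]

lemma polar (n : ℕ) (hn : 1 ≤ n) (f : ℝ → ℝ) :
    (IntegrableOn (fun y : ℝ => y ^ (n - 1) * f y) (Set.Ioi 0) →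
      Integrable (fun x : Fin n → ℝ => f (√(∑ i, x i ^ 2)))) ∧
    ∫ x : Fin n → ℝ, f (√(∑ i, x i ^ 2)) =
      (n * (volume : Measure (EuclideanSpace ℝ (Fin n))).real (Metric.ball 0 1)) *
        ∫ y in Set.Ioi (0 : ℝ), y ^ (n - 1) * f y := by
  haveI : Nonempty (Fin n) := ⟨⟨0, hn⟩⟩
  have hmp := EuclideanSpace.volume_preserving_symm_measurableEquiv_toLp (Fin n)
  have hnorm : ∀ x : EuclideanSpace ℝ (Fin n),
      √(∑ i, ((MeasurableEquiv.toLp 2 (Fin n → ℝ)).symm x) i ^ 2) = ‖x‖ := by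
    intro x
    rw [EuclideanSpace.norm_eq]
    simp
  constructor
  · intro h
    rw [← hmp.integrable_comp_emb (MeasurableEquiv.measurableEmbedding _)]
    simp only [Function.comp_def, hnorm]
    rw [integrable_fun_norm_addHaar]
    simpa using h
  · rw [← hmp.integral_comp']
    simp only [hnorm]
    rw [integral_fun_norm_addHaar]
    simp [mul_assoc]

noncomputable def eps (n : ℕ) : ℝ :=
  if h : 0 < n then (∫ x : Fin n → ℝ, GG n x * (x ⟨0, h⟩ * x ⟨0, h⟩)) / (∫ x, GG n x) - 1 else 0

set_option maxHeartbeats 2000000 in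
lemma eps_bound (n : ℕ) (hn : 150 ≤ n) : |eps n| ≤ 20 / n := by
  have hn0 : 0 < n := by omega
  obtain ⟨m, rfl⟩ : ∃ m, n = m + 1 := ⟨n - 1, by omega⟩
  have hnr : (149 : ℝ) ≤ m := by exact_mod_cast (by omega : 149 ≤ m)
  set a := √(3 / 7 * ((m + 1 : ℕ) : ℝ)) with ha
  have ha2 : a ^ 2 = 3 / 7 * (m + 1) := by
    rw [ha, Real.sq_sqrt (by positivity)]; push_cast; ring
  have ha8 : 8 ≤ a := Real.le_sqrt_of_sq_le (by push_cast; linarith)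
  have ha0 : 0 < a := by linarith
  obtain ⟨i0, T0, T0p, T0l, e0⟩ := radial_int m 0 a ha8 (by omega)
  obtain ⟨i2, T2, T2p, T2l, e2⟩ := radial_int m 2 a ha8 (by omega)
  have p0 := (polar (m + 1) (by omega) (fun y => y ^ 0 * Real.exp (-(m : ℝ) * radialF a y)))
  have p2 := (polar (m + 1) (by omega) (fun y => y ^ 2 * Real.exp (-(m : ℝ) * radialF a y)))
  simp only [Nat.add_sub_cancel] at p0 p2
  have q0 := p0.1 i0
  have q2 := p2.1 i2
  have r0 := p0.2
  have r2 := p2.2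
  rw [e0] at r0
  rw [e2] at r2
  set V := (((m + 1 : ℕ) : ℝ) * (volume : Measure (EuclideanSpace ℝ (Fin (m + 1)))).real (Metric.ball 0 1)) with hV
  have hVpos : 0 < V := by
    have : 0 < (volume : Measure (EuclideanSpace ℝ (Fin (m + 1)))).real (Metric.ball 0 1) :=
      ENNReal.toReal_pos (Metric.measure_ball_pos _ _ one_pos).ne' measure_ball_lt_top.ne
    positivity
  have g0 : ∀ x : Fin (m + 1) → ℝ, √(∑ i, x i ^ 2) ^ 0 * Real.exp (-(m : ℝ) * radialF a (√(∑ i, x i ^ 2))) = GG (m + 1) x := by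
    intro x; simp [GG, ha]
  have g2 : ∀ x : Fin (m + 1) → ℝ, √(∑ i, x i ^ 2) ^ 2 * Real.exp (-(m : ℝ) * radialF a (√(∑ i, x i ^ 2))) = ∑ i, GG (m + 1) x * (x i * x i) := by
    intro x
    rw [← Finset.mul_sum, Real.sq_sqrt (Finset.sum_nonneg fun i _ => sq_nonneg _), mul_comm]
    simp [GG, ha, pow_two]
  simp only [g0] at q0 r0
  simp only [g2] at q2 r2
  have hint : ∀ i : Fin (m + 1), Integrable (fun x : Fin (m + 1) → ℝ => GG (m + 1) x * (x i * x i)) := by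
    intro i
    refine q2.mono' ?_ (Filter.Eventually.of_forall fun x => ?_)
    · have := GG_meas (m + 1)
      exact Measurable.aestronglyMeasurable (by fun_prop)
    · have hp : ∀ k, 0 ≤ GG (m + 1) x * (x k * x k) := fun k =>
        mul_nonneg (Real.exp_pos _).le (mul_self_nonneg _)
      rw [Real.norm_of_nonneg (hp i)]
      exact Finset.single_le_sum (f := fun k => GG (m + 1) x * (x k * x k)) (fun k _ => hp k) (Finset.mem_univ i)
  rw [integral_finsetSum _ (fun i _ => hint i),
    Finset.sum_congr rfl (fun i _ => coord_swap_integral (m + 1) i ⟨0, hn0⟩)] at r2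
  simp only [Finset.sum_const, Finset.card_univ, Fintype.card_fin, nsmul_eq_mul] at r2
  rw [eps, dif_pos hn0]
  set S := ∫ x : Fin (m + 1) → ℝ, GG (m + 1) x * (x ⟨0, hn0⟩ * x ⟨0, hn0⟩)
  set Z := ∫ x, GG (m + 1) x
  push_cast at *
  set N : ℝ := (m : ℝ) + 1 with hN
  have hN150 : 150 ≤ N := by linarith
  have hm : (m : ℝ) = N - 1 := by linarith
  rw [hm] at r0 r2 T0l T2l
  norm_num at r0 r2 T0l T2l
  have hZ : V * a ≤ Z := by
    rw [r0]
    gcongr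
    have : 0 ≤ a / N := by positivity
    linarith
  have hNa : N = 7 / 3 * a ^ 2 := by linarith
  have hZ0 : 0 < Z := lt_of_lt_of_le (by positivity) hZ
  have c1 : T0 ≤ a * (4 / N) := T0l.trans (by
    rw [mul_div_assoc', div_le_div_iff₀ (by linarith) (by linarith)]; nlinarith)
  have c2 : T2 ≤ a ^ 3 * (10 / N) := T2l.trans (by
    rw [mul_div_assoc', div_le_div_iff₀ (by linarith) (by linarith)]
    have : 0 < a ^ 3 := by positivity
    nlinarith)
  have c3 : a ^ 3 / (N - 1 + 2 + 1) ≤ a ^ 3 * (1 / N) := by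
    rw [mul_one_div]
    exact div_le_div_of_nonneg_left (by positivity) (by linarith) (by linarith)
  have c3' : 0 ≤ a ^ 3 / (N - 1 + 2 + 1) := div_nonneg (by positivity) (by linarith)
  have hd : N * S - N * Z = V * (a ^ 3 / (N - 1 + 2 + 1) + T2 - N * (a / N + T0)) := by
    rw [r0, r2]
    have : N * a = 7 / 3 * a ^ 3 := by rw [hNa]; ring
    linear_combination (-V) * this
  have c4 : N * (a / N + T0) ≤ a ^ 3 * (12 / N) := by
    have : a / N + T0 ≤ 5 * (a / N) := by
      have : a * (4 / N) = 4 * (a / N) := by ring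
      linarith
    calc N * (a / N + T0) ≤ N * (5 * (a / N)) := by gcongr
      _ = 5 * a := by field_simp
      _ ≤ a ^ 3 * (12 / N) := by
        rw [mul_div_assoc', le_div_iff₀ (by linarith), hNa]
        nlinarith [pow_pos ha0 3]
  have c4' : 0 ≤ N * (a / N + T0) := by positivity
  have habs : |N * S - N * Z| ≤ V * (a ^ 3 * (20 / N)) := by
    rw [hd, abs_mul, abs_of_pos hVpos]
    gcongr
    have : 0 < a ^ 3 * (1 / N) := by positivity
    have e1 : a ^ 3 * (20 / N) = 20 * (a ^ 3 * (1 / N)) := by ring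
    have e2 : a ^ 3 * (10 / N) = 10 * (a ^ 3 * (1 / N)) := by ring
    have e3 : a ^ 3 * (12 / N) = 12 * (a ^ 3 * (1 / N)) := by ring
    rw [abs_le]
    constructor <;> linarith
  have hfin : S / Z - 1 = (N * S - N * Z) / (N * Z) := by
    field_simp
  rw [hfin, abs_div, abs_of_pos (show 0 < N * Z by positivity), div_le_iff₀ (by positivity)]
  refine habs.trans ?_
  calc V * (a ^ 3 * (20 / N)) ≤ 20 / N * ((7 / 3 * a ^ 2) * (V * a)) := by
        have : 0 ≤ 20 / N * (V * a ^ 3) := by positivity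
        nlinarith
    _ ≤ 20 / N * (N * Z) := by rw [← hNa]; gcongr

theorem essentially_isotropic_radial :
    ∃ C : ℝ, 0 < C ∧
      ∀ n : ℕ, 1 ≤ n →
        ∀ (Cn : ℝ) (μ : Measure (Fin n → ℝ)),
          μ = (volume : Measure (Fin n → ℝ)).withDensity
            (fun x => ENNReal.ofReal (Cn * Real.exp (-((n : ℝ) - 1) *
              radialF (Real.sqrt (3 / 7 * n)) (Real.sqrt (∑ i, (x i) ^ 2))))) →
          IsProbabilityMeasure μ →
          (∀ i, ∫ x, x i ∂μ = 0) ∧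
            ∃ ε : ℝ, |ε| ≤ C / n ∧
              ∀ i j, ∫ x, x i * x j ∂μ = (1 + ε) * (if i = j then 1 else 0) := by
  refine ⟨20 + ∑ n ∈ Finset.range 150, n * |eps n|, ?_, ?_⟩
  · have : 0 ≤ ∑ n ∈ Finset.range 150, (n : ℝ) * |eps n| :=
      Finset.sum_nonneg fun n _ => by positivity
    linarith
  intro n hn Cn μ hμ hP
  have hC : 0 < Cn := by
    by_contra hC
    have : μ = 0 := by
      rw [hμ]
      convert withDensity_zero (μ := (volume : Measure (Fin n → ℝ))) using 2
      funext x
      exact ENNReal.ofReal_of_nonpos (mul_nonpos_of_nonpos_of_nonneg (not_lt.1 hC) (Real.exp_pos _).le)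
    exact IsProbabilityMeasure.ne_zero μ this
  have hI : ∀ g : (Fin n → ℝ) → ℝ, ∫ x, g x ∂μ = Cn * ∫ x, GG n x * g x := by
    intro g
    have hm : Measurable (fun x : Fin n → ℝ => ENNReal.ofReal (Cn * GG n x)) :=
      ((GG_meas n).const_mul Cn).ennreal_ofReal
    change μ = (volume : Measure (Fin n → ℝ)).withDensity (fun x => ENNReal.ofReal (Cn * GG n x)) at hμ
    rw [hμ, integral_withDensity_eq_integral_toReal_smul hm (Filter.Eventually.of_forall fun x => ENNReal.ofReal_lt_top),
      ← integral_const_mul]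
    congr 1
    funext x
    rw [ENNReal.toReal_ofReal (mul_nonneg hC.le (show 0 ≤ GG n x from (Real.exp_pos _).le)), smul_eq_mul, mul_assoc]
  have hZ : Cn * ∫ x, GG n x = 1 := by
    have := hI (fun _ => 1)
    simp at this
    exact this.symm
  refine ⟨fun i => ?_, eps n, ?_, fun i j => ?_⟩
  · rw [hI, flip_integral n i, mul_zero]
    intro x
    rw [GG_flip]
    simp [flipFun]
  · by_cases h : 150 ≤ n
    · refine (eps_bound n h).trans ?_
      gcongr
      have : 0 ≤ ∑ n ∈ Finset.range 150, (n : ℝ) * |eps n| :=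
        Finset.sum_nonneg fun n _ => by positivity
      linarith
    · have hn' : (0 : ℝ) < n := by exact_mod_cast hn
      rw [le_div_iff₀ hn', mul_comm]
      have := Finset.single_le_sum (f := fun n : ℕ => (n : ℝ) * |eps n|) (s := Finset.range 150)
        (fun k _ => by positivity) (Finset.mem_range.2 (not_le.1 h))
      linarith
  · by_cases hij : i = j
    · subst hij
      rw [hI, coord_swap_integral n i ⟨0, hn⟩, if_pos rfl, eps, dif_pos (show 0 < n from hn)]
      have hZ0 : (∫ x, GG n x) ≠ 0 := by
        intro h0; rw [h0] at hZ; simp at hZ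
      have : Cn = 1 / ∫ x, GG n x := by field_simp; exact hZ
      rw [this]
      ring
    · rw [hI, flip_integral n i, if_neg hij, mul_zero, mul_zero]
      intro x
      rw [GG_flip]
      have : j ≠ i := fun h => hij h.symm
      simp [flipFun, this]
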